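/- Let η = (η^1, …, η^k) be a smooth ℝ^k-valued differential one-form on an open set U ⊆ ℝ^m with Reeb vector fields R_1, …, R_k. Let f = (f^1,…,f^k), g = (g^1,…,g^k), h = (h^1,…,h^k) be smooth ℝ^k-valued functions on U that are first integrals of all Reeb vector fields (R_βf^α = R_βg^α = R_βh^α = 0 for all α, β), and define g⋆h := (g^1h^1, …, g^kh^k). Suppose X_f, X_g, X_h and X_{g⋆h} are η-Hamiltonian vector fields with η-Hamiltonian k-functions f, g, h and g⋆h, respectively. Then for each α ∈ {1,…,k} and all x ∈ U: η^α_x([X_f, X_{g⋆h}](x)) = η^α_x([X_f, X_g](x))·h^α(x) + g^α(x)·η^α_x([X_f, X_h](x)). (This is the Leibniz identity {f, g⋆h}_η = {f,g}_η ⋆ h + g ⋆ {f,h}_η making the first integrals of the Reeb vector fields in C^∞_η(M, ℝ^k) a Poisson algebra.) -/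

import Mathlib

/-- Lie bracket of vector fields: `[X, Y](x) = DY(x)(X(x)) − DX(x)(Y(x))`. -/
noncomputable def lieBr {E : Type*} [NormedAddCommGroup E] [NormedSpace ℝ E]
    (X Y : E → E) : E → E :=
  fun x => fderiv ℝ Y x (X x) - fderiv ℝ X x (Y x)

/-- Exterior derivative of a one-form: `dθ_x(u, v) = Dθ(x)(u)(v) − Dθ(x)(v)(u)`. -/
noncomputable def extD {E : Type*} [NormedAddCommGroup E] [NormedSpace ℝ E]
    (θ : E → (E →L[ℝ] ℝ)) (x u v : E) : ℝ :=
  fderiv ℝ θ x u v - fderiv ℝ θ x v u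

/-!
The Lie derivative of a one-form satisfies `θ([X, Y]) = X(θ(Y)) - (L_X θ)(Y)`. By Cartan's
formula, a Hamiltonian vector field of `f` has `L_X η^α = -∑ β, (R_β f^α) η^β`, which vanishes when
`f` is a first integral of the Reeb vector fields. The bracket `{f, g}_η` is then `-X_f(g)`
componentwise, and the Leibniz identity is the product rule for the derivation `X_f`.
-/

section OneForm

variable {E : Type*} [NormedAddCommGroup E] [NormedSpace ℝ E]
  {θ : E → (E →L[ℝ] ℝ)} {X Y : E → E} {x : E}

/-- The Lie derivative `L_X θ` of a one-form along a vector field, in the coordinate form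
`(L_X θ)(v) = Dθ(X)(v) + θ(DX(v))`. Its vanishing expresses that `X` is an infinitesimal symmetry
of `θ`. -/
noncomputable def lieDerivOneForm (X : E → E) (θ : E → (E →L[ℝ] ℝ)) (x : E) : E →L[ℝ] ℝ :=
  fderiv ℝ θ x (X x) + θ x ∘L fderiv ℝ X x

theorem fderiv_oneForm_apply (hθ : DifferentiableAt ℝ θ x) (hY : DifferentiableAt ℝ Y x) (v : E) :
    fderiv ℝ (fun y => θ y (Y y)) x v = fderiv ℝ θ x v (Y x) + θ x (fderiv ℝ Y x v) := by
  simp [fderiv_clm_apply hθ hY, add_comm]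

theorem lieDerivOneForm_apply_eq_fderiv_add_extD (hθ : DifferentiableAt ℝ θ x)
    (hX : DifferentiableAt ℝ X x) (v : E) :
    lieDerivOneForm X θ x v = fderiv ℝ (fun y => θ y (X y)) x v + extD θ x (X x) v := by
  simp only [lieDerivOneForm, extD, fderiv_oneForm_apply hθ hX, add_apply,
    ContinuousLinearMap.comp_apply]
  ring

theorem oneForm_lieBr_eq_fderiv_sub_lieDerivOneForm (hθ : DifferentiableAt ℝ θ x)
    (hY : DifferentiableAt ℝ Y x) :
    θ x (lieBr X Y x) = fderiv ℝ (fun y => θ y (Y y)) x (X x) - lieDerivOneForm X θ x (Y x) := by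
  simp only [lieBr, lieDerivOneForm, fderiv_oneForm_apply hθ hY, map_sub, add_apply,
    ContinuousLinearMap.comp_apply]
  ring

theorem oneForm_lieBr_eq_neg_fderiv {g : E → ℝ} (hθ : DifferentiableAt ℝ θ x)
    (hY : DifferentiableAt ℝ Y x) (hXθ : lieDerivOneForm X θ x = 0)
    (hg : (fun y => θ y (Y y)) =ᶠ[nhds x] fun y => -g y) :
    θ x (lieBr X Y x) = -fderiv ℝ g x (X x) := by
  simp [oneForm_lieBr_eq_fderiv_sub_lieDerivOneForm hθ hY, hXθ, hg.fderiv_eq]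

theorem lieDerivOneForm_eq_neg_sum_of_hamiltonian {ι : Type*} [Fintype ι]
    {η : ι → E → (E →L[ℝ] ℝ)} {R : ι → E → E} {α : ι} {f : E → ℝ}
    (hη : DifferentiableAt ℝ (η α) x) (hX : DifferentiableAt ℝ X x)
    (hf : (fun y => η α y (X y)) =ᶠ[nhds x] fun y => -f y)
    (hdf : ∀ v, extD (η α) x (X x) v =
      fderiv ℝ f x v - ∑ β, fderiv ℝ f x (R β x) * η β x v) :
    lieDerivOneForm X (η α) x = -∑ β, fderiv ℝ f x (R β x) • η β x := by
  ext v
  rw [lieDerivOneForm_apply_eq_fderiv_add_extD hη hX, hf.fderiv_eq, hdf]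
  simp only [fderiv_fun_neg, neg_apply, sum_apply, smul_apply, smul_eq_mul]
  ring

theorem stmt_19_general {U : Set E} (hU : IsOpen U) (hθ : DifferentiableOn ℝ θ U)
    {Xg Xh Xgh : E → E} (hXg : DifferentiableOn ℝ Xg U) (hXh : DifferentiableOn ℝ Xh U)
    (hXgh : DifferentiableOn ℝ Xgh U) {g h : E → ℝ}
    (hg : ∀ y ∈ U, θ y (Xg y) = -g y) (hh : ∀ y ∈ U, θ y (Xh y) = -h y)
    (hgh : ∀ y ∈ U, θ y (Xgh y) = -(g y * h y))
    (hx : x ∈ U) (hXθ : lieDerivOneForm X θ x = 0) :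
    θ x (lieBr X Xgh x) = θ x (lieBr X Xg x) * h x + g x * θ x (lieBr X Xh x) := by
  have hUx : U ∈ nhds x := hU.mem_nhds hx
  have differentiableAt_of_pairing {Y : E → E} {p : E → ℝ} (hY : DifferentiableOn ℝ Y U)
      (hp : ∀ y ∈ U, θ y (Y y) = -p y) : DifferentiableAt ℝ p x :=
    ((hθ.clm_apply hY).neg.congr fun y hy => by simp [hp y hy]).differentiableAt hUx
  have lieBr_eq {Y : E → E} {p : E → ℝ} (hY : DifferentiableOn ℝ Y U)
      (hp : ∀ y ∈ U, θ y (Y y) = -p y) : θ x (lieBr X Y x) = -fderiv ℝ p x (X x) :=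
    oneForm_lieBr_eq_neg_fderiv (hθ.differentiableAt hUx) (hY.differentiableAt hUx) hXθ
      (Filter.eventuallyEq_of_mem hUx hp)
  have leibniz : fderiv ℝ (fun y => g y * h y) x (X x) =
      g x * fderiv ℝ h x (X x) + h x * fderiv ℝ g x (X x) := by
    simp [fderiv_fun_mul (differentiableAt_of_pairing hXg hg) (differentiableAt_of_pairing hXh hh)]
  rw [lieBr_eq hXgh hgh, lieBr_eq hXg hg, lieBr_eq hXh hh, leibniz]
  ring

end OneForm

/-- **Leibniz identity `{f, g⋆h}_η = {f, g}_η ⋆ h + g ⋆ {f, h}_η`.** Let `η` be a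
smooth `ℝ^k`-valued one-form on an open `U ⊆ ℝ^m` with Reeb vector fields
`R_1, …, R_k`, let `f, g, h` be smooth `ℝ^k`-valued functions that are first
integrals of all Reeb vector fields, and let `g⋆h := (g^1h^1, …, g^kh^k)`.
If `X_f, X_g, X_h, X_{g⋆h}` are `η`-Hamiltonian vector fields with
`η`-Hamiltonian k-functions `f, g, h, g⋆h` respectively, then for each `α` and
`x ∈ U`: `η^α([X_f, X_{g⋆h}]) = η^α([X_f, X_g])·h^α + g^α·η^α([X_f, X_h])`. -/
theorem stmt_19 (m k : ℕ) (U : Set (Fin m → ℝ)) (hU : IsOpen U)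
    (η : Fin k → (Fin m → ℝ) → ((Fin m → ℝ) →L[ℝ] ℝ))
    (hη : ∀ α, ContDiffOn ℝ (⊤ : ℕ∞) (η α) U)
    (R : Fin k → (Fin m → ℝ) → (Fin m → ℝ))
    (hRs : ∀ α, ContDiffOn ℝ (⊤ : ℕ∞) (R α) U)
    (hReeb : ∀ x ∈ U, ∀ α β : Fin k,
      η β x (R α x) = (if α = β then (1 : ℝ) else 0) ∧
      ∀ v, extD (η β) x (R α x) v = 0)
    (f g h : Fin k → (Fin m → ℝ) → ℝ)
    (hfs : ∀ α, ContDiffOn ℝ (⊤ : ℕ∞) (f α) U)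
    (hgs : ∀ α, ContDiffOn ℝ (⊤ : ℕ∞) (g α) U)
    (hhs : ∀ α, ContDiffOn ℝ (⊤ : ℕ∞) (h α) U)
    (hFIf : ∀ x ∈ U, ∀ α β : Fin k, fderiv ℝ (f α) x (R β x) = 0)
    (hFIg : ∀ x ∈ U, ∀ α β : Fin k, fderiv ℝ (g α) x (R β x) = 0)
    (hFIh : ∀ x ∈ U, ∀ α β : Fin k, fderiv ℝ (h α) x (R β x) = 0)
    (Xf Xg Xh Xgh : (Fin m → ℝ) → (Fin m → ℝ))
    (hXfs : ContDiffOn ℝ (⊤ : ℕ∞) Xf U) (hXgs : ContDiffOn ℝ (⊤ : ℕ∞) Xg U)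
    (hXhs : ContDiffOn ℝ (⊤ : ℕ∞) Xh U) (hXghs : ContDiffOn ℝ (⊤ : ℕ∞) Xgh U)
    (hHamf : ∀ x ∈ U, ∀ α : Fin k,
      η α x (Xf x) = -(f α x) ∧
      ∀ v, extD (η α) x (Xf x) v =
        fderiv ℝ (f α) x v - ∑ β, fderiv ℝ (f α) x (R β x) * η β x v)
    (hHamg : ∀ x ∈ U, ∀ α : Fin k,
      η α x (Xg x) = -(g α x) ∧
      ∀ v, extD (η α) x (Xg x) v =
        fderiv ℝ (g α) x v - ∑ β, fderiv ℝ (g α) x (R β x) * η β x v)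
    (hHamh : ∀ x ∈ U, ∀ α : Fin k,
      η α x (Xh x) = -(h α x) ∧
      ∀ v, extD (η α) x (Xh x) v =
        fderiv ℝ (h α) x v - ∑ β, fderiv ℝ (h α) x (R β x) * η β x v)
    (hHamgh : ∀ x ∈ U, ∀ α : Fin k,
      η α x (Xgh x) = -(g α x * h α x) ∧
      ∀ v, extD (η α) x (Xgh x) v =
        fderiv ℝ (fun y => g α y * h α y) x v -
          ∑ β, fderiv ℝ (fun y => g α y * h α y) x (R β x) * η β x v) :
    ∀ α : Fin k, ∀ x ∈ U,
      η α x (lieBr Xf Xgh x) =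
        η α x (lieBr Xf Xg x) * h α x + g α x * η α x (lieBr Xf Xh x) := by
  intro α x hx
  have hUx : U ∈ nhds x := hU.mem_nhds hx
  have h_top : ((⊤ : ℕ∞) : WithTop ℕ∞) ≠ 0 := by simp
  have hηα : DifferentiableOn ℝ (η α) U := (hη α).differentiableOn h_top
  have lieDeriv_eq_zero : lieDerivOneForm Xf (η α) x = 0 := by
    rw [lieDerivOneForm_eq_neg_sum_of_hamiltonian (hηα.differentiableAt hUx)
      ((hXfs.differentiableOn h_top).differentiableAt hUx)
      (Filter.eventuallyEq_of_mem hUx fun y hy => (hHamf y hy α).1) (hHamf x hx α).2]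
    simp [hFIf x hx α]
  exact stmt_19_general hU hηα (hXgs.differentiableOn h_top) (hXhs.differentiableOn h_top)
    (hXghs.differentiableOn h_top) (fun y hy => (hHamg y hy α).1) (fun y hy => (hHamh y hy α).1)
    (fun y hy => (hHamgh y hy α).1) hx lieDeriv_eq_zero
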